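/- Let G be a group acting by isometries on a geodesic δ-hyperbolic metric space S. Then every pair of distinct points of the Gromov boundary ∂S satisfies condition (C1) for the induced action of G on ∂S. -/

import Mathlib

/-!
Write `(a·b)` for Gromov products based at `e`. The quantity `(a·a') + (b·b') - (a·b) - (a'·b')`
depends only on distances between `a, a', b, b'`, not on `e`, so isometries preserve it. When
`a, a'` are close to `p` and `b, b'` are close to `q ≠ p`, it is as large as we like. When an
isometry `f` brings both `f a, f b` close to `x` and both `f a', f b'` close to `y ≠ x`, its value
at the four images is at most `(f a·f a') + (f b·f b')`, which is bounded in terms of `x, y` only.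
Hence suitable neighbourhoods of `p, q` leave no such isometry at all: the exceptional set is not
only finite but empty.

The argument takes place in `S`, along sequences representing the boundary points; the four-point
inequality makes upper bounds on boundary products valid, up to a constant, along all of them.
-/

/-- A geodesic segment from `u` to `v`: the image of an isometric embedding of
`[0, dist u v]` sending the endpoints to `u` and `v`. -/
def IsGeodesicSegment {S : Type*} [MetricSpace S] (Γ : Set S) (u v : S) : Prop :=
  ∃ γ : ℝ → S, γ 0 = u ∧ γ (dist u v) = v ∧
    (∀ s ∈ Set.Icc (0 : ℝ) (dist u v), ∀ t ∈ Set.Icc (0 : ℝ) (dist u v),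
      dist (γ s) (γ t) = |s - t|) ∧
    Γ = γ '' Set.Icc (0 : ℝ) (dist u v)

/-- A geodesic metric space: every pair of points is joined by a geodesic segment. -/
def GeodesicSpace (S : Type*) [MetricSpace S] : Prop :=
  ∀ u v : S, ∃ Γ : Set S, IsGeodesicSegment Γ u v

/-- `δ`-hyperbolicity: every geodesic triangle is `δ`-slim. -/
def DeltaHyperbolic (S : Type*) [MetricSpace S] (δ : ℝ) : Prop :=
  ∀ x y z : S, ∀ Γ₁ Γ₂ Γ₃ : Set S,
    IsGeodesicSegment Γ₁ x y → IsGeodesicSegment Γ₂ y z → IsGeodesicSegment Γ₃ z x →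
    ∀ p ∈ Γ₁, Metric.infDist p (Γ₂ ∪ Γ₃) ≤ δ

/-- A (left) action of a group `G` on a set `M`, given as a plain function. -/
def IsAction {G M : Type*} [Group G] (act : G → M → M) : Prop :=
  (∀ x : M, act 1 x = x) ∧ ∀ (g h : G) (x : M), act (g * h) x = act g (act h x)

/-- An action by homeomorphisms on a topological space. -/
def IsActionByHomeos {G M : Type*} [Group G] [TopologicalSpace M] (act : G → M → M) : Prop :=
  IsAction act ∧ ∀ g : G, Continuous (act g)

/-- An action by isometries on a metric space. -/
def IsIsometricAction {G S : Type*} [Group G] [MetricSpace S] (act : G → S → S) : Prop :=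
  IsAction act ∧ ∀ g : G, Isometry (act g)

theorem IsAction.injective {G M : Type*} [Group G] {act : G → M → M}
    (h : IsAction act) (g : G) : Function.Injective (act g) := by
  intro a b hab
  have h2 := congrArg (act g⁻¹) hab
  rw [← h.2 g⁻¹ g a, ← h.2 g⁻¹ g b, inv_mul_cancel, h.1, h.1] at h2
  exact h2

/-- The Gromov product of `x` and `y` with respect to the basepoint `e`. -/
noncomputable def gprod {S : Type*} [MetricSpace S] (e x y : S) : ℝ :=
  (dist x e + dist y e - dist x y) / 2

/-- A sequence converges to infinity if its pairwise Gromov products tend to infinity. -/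
def ConvToInfty {S : Type*} [MetricSpace S] (e : S) (s : ℕ → S) : Prop :=
  Filter.Tendsto (fun p : ℕ × ℕ => gprod e (s p.1) (s p.2)) Filter.atTop Filter.atTop

/-- The type of sequences in `S` converging to infinity. -/
def BSeq (S : Type*) [MetricSpace S] (e : S) := {s : ℕ → S // ConvToInfty e s}

/-- Two sequences converging to infinity are equivalent if their mutual Gromov
products tend to infinity. -/
def bequiv {S : Type*} [MetricSpace S] (e : S) (s t : BSeq S e) : Prop :=
  Filter.Tendsto (fun n => gprod e (s.1 n) (t.1 n)) Filter.atTop Filter.atTop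

/-- The Gromov boundary of `S` with respect to the basepoint `e`. -/
def GBoundary (S : Type*) [MetricSpace S] (e : S) := Quot (bequiv (S := S) e)

/-- A sequence in `S` tends to the boundary point `x`. -/
def TendstoBd {S : Type*} [MetricSpace S] (e : S) (s : ℕ → S) (x : GBoundary S e) : Prop :=
  ∃ h : ConvToInfty e s, Quot.mk _ (⟨s, h⟩ : BSeq S e) = x

/-- The Gromov product of a point `u ∈ S` with a boundary point `x`:
the infimum over sequences tending to `x` of the liminf of Gromov products. -/
noncomputable def gprodSB {S : Type*} [MetricSpace S] (e u : S) (x : GBoundary S e) : EReal :=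
  sInf {r : EReal | ∃ s : ℕ → S, TendstoBd e s x ∧
    r = Filter.liminf (fun n => (gprod e u (s n) : EReal)) Filter.atTop}

/-- The Gromov product of two boundary points. -/
noncomputable def gprodBB {S : Type*} [MetricSpace S] (e : S) (x y : GBoundary S e) : EReal :=
  sInf {r : EReal | ∃ s t : ℕ → S, TendstoBd e s x ∧ TendstoBd e t y ∧
    r = Filter.liminf (fun p : ℕ × ℕ => (gprod e (s p.1) (t p.2) : EReal)) Filter.atTop}

/-- `UK e K x = {s ∈ S | (x·s)_e > K}`. -/
def UK {S : Type*} [MetricSpace S] (e : S) (K : ℝ) (x : GBoundary S e) : Set S :=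
  {u : S | (K : EReal) < gprodSB e u x}

/-- `d'(x,y) = exp (−ζ (x·y)_e)` on the boundary (equal to `0` when the product is `∞`). -/
noncomputable def dExp {S : Type*} [MetricSpace S] (e : S) (ζ : ℝ) (x y : GBoundary S e) : ℝ :=
  if gprodBB e x y = ⊤ then 0 else Real.exp (-ζ * (gprodBB e x y).toReal)

/-- The chain metric `ρ(x,y) = inf Σ d'(s_k, s_{k+1})` over finite chains from `x` to `y`. -/
noncomputable def rhoChain {S : Type*} [MetricSpace S] (e : S) (ζ : ℝ)
    (x y : GBoundary S e) : ℝ :=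
  sInf {r : ℝ | ∃ (n : ℕ) (c : ℕ → GBoundary S e), c 0 = x ∧ c n = y ∧
    r = ∑ k ∈ Finset.range n, dExp e ζ (c k) (c (k + 1))}

/-- `ρ` is a metric. -/
def IsMetricFn {B : Type*} (ρ : B → B → ℝ) : Prop :=
  (∀ x y, 0 ≤ ρ x y) ∧ (∀ x y, ρ x y = 0 ↔ x = y) ∧ (∀ x y, ρ x y = ρ y x) ∧
  ∀ x y z, ρ x z ≤ ρ x y + ρ y z

/-- `ζ` is a suitable visual parameter: `ζ > 0`, the associated chain function `ρ` is a
metric on the boundary, and `d'/2 ≤ ρ ≤ d'`. -/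
def VisualParam {S : Type*} [MetricSpace S] (e : S) (ζ : ℝ) : Prop :=
  0 < ζ ∧ IsMetricFn (rhoChain e ζ) ∧
  ∀ x y : GBoundary S e, dExp e ζ x y / 2 ≤ rhoChain e ζ x y ∧ rhoChain e ζ x y ≤ dExp e ζ x y

/-- The topology on the Gromov boundary induced by the visual metric `ρ`. -/
noncomputable def bdTopology (S : Type*) [MetricSpace S] (e : S) (ζ : ℝ) :
    TopologicalSpace (GBoundary S e) :=
  TopologicalSpace.generateFrom
    {B | ∃ (x : GBoundary S e) (ε : ℝ), 0 < ε ∧ B = {y | rhoChain e ζ x y < ε}}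

theorem gprod_comp_ge {S : Type*} [MetricSpace S] (e : S) {f : S → S} (hf : Isometry f)
    (a b : S) : gprod e a b - dist (f e) e ≤ gprod e (f a) (f b) := by
  have h1 : dist a e - dist (f e) e ≤ dist (f a) e := by
    have h := dist_triangle (f a) e (f e)
    rw [hf.dist_eq] at h
    have hc := dist_comm e (f e)
    linarith
  have h2 : dist b e - dist (f e) e ≤ dist (f b) e := by
    have h := dist_triangle (f b) e (f e)
    rw [hf.dist_eq] at h
    have hc := dist_comm e (f e)
    linarith
  have h3 : dist (f a) (f b) = dist a b := hf.dist_eq a b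
  simp only [gprod, h3]; linarith

theorem ConvToInfty.comp {S : Type*} [MetricSpace S] {e : S} {f : S → S} (hf : Isometry f)
    {s : ℕ → S} (hs : ConvToInfty e s) : ConvToInfty e (fun n => f (s n)) := by
  have h : Filter.Tendsto (fun p : ℕ × ℕ => gprod e (s p.1) (s p.2) + -dist (f e) e)
      Filter.atTop Filter.atTop := Filter.tendsto_atTop_add_const_right _ _ hs
  refine Filter.tendsto_atTop_mono (fun p => ?_) h
  have := gprod_comp_ge e hf (s p.1) (s p.2)
  simpa [sub_eq_add_neg] using this

/-- The map induced on the Gromov boundary by an isometry of `S`. -/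
def bdMap {S : Type*} [MetricSpace S] (e : S) (f : S → S) (hf : Isometry f) :
    GBoundary S e → GBoundary S e :=
  Quot.map (fun s : BSeq S e => (⟨fun n => f (s.1 n), s.2.comp hf⟩ : BSeq S e))
    (by
      intro s t h
      have h' : Filter.Tendsto (fun n => gprod e (s.1 n) (t.1 n) + -dist (f e) e)
          Filter.atTop Filter.atTop := Filter.tendsto_atTop_add_const_right _ _ h
      refine Filter.tendsto_atTop_mono (fun n => ?_) h'
      have := gprod_comp_ge e hf (s.1 n) (t.1 n)
      simpa [sub_eq_add_neg] using this)

/-- The induced map on pairs. -/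
def pairMap {M : Type*} (f : M → M) (p : M × M) : M × M := (f p.1, f p.2)

/-- Condition (C) for an action on a topological space. -/
def ConditionC {G M : Type*} [TopologicalSpace M] (act : G → M → M) : Prop :=
  ∀ u v : M × M, u.1 = u.2 → v.1 = v.2 → u ≠ v →
    ∃ U V : Set (M × M), IsOpen U ∧ IsOpen V ∧ u ∈ U ∧ v ∈ V ∧
      ∀ a b : M × M, a.1 ≠ a.2 → b.1 ≠ b.2 → a ≠ b →
        ∃ A B : Set (M × M), IsOpen A ∧ IsOpen B ∧ a ∈ A ∧ b ∈ B ∧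
          {g : G | (pairMap (act g) '' A ∩ U).Nonempty ∧
            (pairMap (act g) '' B ∩ V).Nonempty}.Finite

/-- Condition (C₁) for a pair of open sets `U, V`. -/
def CondC1 {G M : Type*} [TopologicalSpace M] (act : G → M → M) (U V : Set M) : Prop :=
  ∀ p q : M, p ≠ q →
    ∃ A B : Set M, IsOpen A ∧ IsOpen B ∧ p ∈ A ∧ q ∈ B ∧
      {g : G | (act g '' A ∩ U).Nonempty ∧ (act g '' A ∩ V).Nonempty ∧
        (act g '' B ∩ U).Nonempty ∧ (act g '' B ∩ V).Nonempty}.Finite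

/-- Condition (C₂) for a pair of open sets `U, V`. -/
def CondC2 {G M : Type*} [TopologicalSpace M] (act : G → M → M) (U V : Set M) : Prop :=
  ∀ p q r : M, p ≠ q → q ≠ r → p ≠ r →
    ∃ A B C : Set M, IsOpen A ∧ IsOpen B ∧ IsOpen C ∧ p ∈ A ∧ q ∈ B ∧ r ∈ C ∧
      {g : G | (act g '' A ∩ U).Nonempty ∧ (act g '' B ∩ V).Nonempty ∧
        (act g '' C ∩ U).Nonempty ∧ (act g '' C ∩ V).Nonempty}.Finite

/-- Condition (C₃) for a pair of open sets `U, V`. -/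
def CondC3 {G M : Type*} [TopologicalSpace M] (act : G → M → M) (U V : Set M) : Prop :=
  ∀ p q r s : M, p ≠ q → p ≠ r → p ≠ s → q ≠ r → q ≠ s → r ≠ s →
    ∃ A B C D : Set M, IsOpen A ∧ IsOpen B ∧ IsOpen C ∧ IsOpen D ∧
      p ∈ A ∧ q ∈ B ∧ r ∈ C ∧ s ∈ D ∧
      {g : G | (act g '' A ∩ U).Nonempty ∧ (act g '' B ∩ U).Nonempty ∧
        (act g '' C ∩ V).Nonempty ∧ (act g '' D ∩ V).Nonempty}.Finite

/-- Two points `x, y` satisfy (C₁): some open sets `U ∋ x`, `V ∋ y` satisfy (C₁). -/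
def PairC1 {G M : Type*} [TopologicalSpace M] (act : G → M → M) (x y : M) : Prop :=
  ∃ U V : Set M, IsOpen U ∧ IsOpen V ∧ x ∈ U ∧ y ∈ V ∧ CondC1 (G := G) act U V

/-- Two points `x, y` satisfy (C₂). -/
def PairC2 {G M : Type*} [TopologicalSpace M] (act : G → M → M) (x y : M) : Prop :=
  ∃ U V : Set M, IsOpen U ∧ IsOpen V ∧ x ∈ U ∧ y ∈ V ∧ CondC2 (G := G) act U V

/-- Two points `x, y` satisfy (C₃). -/
def PairC3 {G M : Type*} [TopologicalSpace M] (act : G → M → M) (x y : M) : Prop :=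
  ∃ U V : Set M, IsOpen U ∧ IsOpen V ∧ x ∈ U ∧ y ∈ V ∧ CondC3 (G := G) act U V

/-- `g` has north–south dynamics on `M` with fixed points `x ≠ y`. -/
def NorthSouthAt {G M : Type*} [Group G] [TopologicalSpace M] (act : G → M → M)
    (g : G) (x y : M) : Prop :=
  x ≠ y ∧ (∀ z : M, act g z = z ↔ z = x ∨ z = y) ∧
  ∀ U V : Set M, IsOpen U → IsOpen V → x ∈ U → y ∈ V →
    ∃ N : ℕ, ∀ n : ℕ, N < n → act (g ^ n) '' Uᶜ ⊆ V

/-- `g` has north–south dynamics on `M`. -/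
def NorthSouth {G M : Type*} [Group G] [TopologicalSpace M] (act : G → M → M) (g : G) : Prop :=
  ∃ x y : M, NorthSouthAt act g x y

/-- A completely Hausdorff space: distinct points are separated by open sets with
disjoint closures. -/
def CompletelyHausdorff (M : Type*) [TopologicalSpace M] : Prop :=
  ∀ u v : M, u ≠ v → ∃ U V : Set M, IsOpen U ∧ IsOpen V ∧ u ∈ U ∧ v ∈ V ∧
    closure U ∩ closure V = ∅

open Filter
open scoped Topology

section GromovProduct

variable {S : Type*} [MetricSpace S]

theorem gprod_comm (e x y : S) : gprod e x y = gprod e y x := by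
  simp only [gprod, dist_comm x y, add_comm (dist x e)]

theorem gprod_nonneg (e x y : S) : 0 ≤ gprod e x y :=
  div_nonneg (sub_nonneg.2 (dist_triangle_right x y e)) zero_le_two

theorem gprod_add_gprod_sub_sub_map {f : S → S} (hf : Isometry f) (e a a' b b' : S) :
    gprod e (f a) (f a') + gprod e (f b) (f b') - gprod e (f a) (f b) - gprod e (f a') (f b') =
      gprod e a a' + gprod e b b' - gprod e a b - gprod e a' b' := by
  simp only [gprod, hf.dist_eq]
  ring

/-- Hyperbolicity in the sense of Gromov's four-point inequality, for the products based at the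
single point `e`. Unlike slimness of triangles it does not involve geodesics. -/
def FourPointHyperbolic (e : S) (δ : ℝ) : Prop :=
  ∀ x y z : S, min (gprod e x y) (gprod e y z) ≤ gprod e x z + δ

theorem FourPointHyperbolic.le_gprod {e : S} {δ : ℝ} (h : FourPointHyperbolic e δ) {x y z : S}
    {K : ℝ} (hxy : K + δ ≤ gprod e x y) (hyz : K + δ ≤ gprod e y z) : K ≤ gprod e x z :=
  le_of_add_le_add_right ((le_min hxy hyz).trans (h x y z))

theorem FourPointHyperbolic.tendsto_gprod_trans {e : S} {δ : ℝ} (h : FourPointHyperbolic e δ)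
    {α : Type*} {l : Filter α} {u v w : α → S}
    (huv : Tendsto (fun i => gprod e (u i) (v i)) l atTop)
    (hvw : Tendsto (fun i => gprod e (v i) (w i)) l atTop) :
    Tendsto (fun i => gprod e (u i) (w i)) l atTop :=
  tendsto_atTop.2 fun K => by
    filter_upwards [huv.eventually_ge_atTop (K + δ), hvw.eventually_ge_atTop (K + δ)]
      with i hi hi' using h.le_gprod hi hi'

end GromovProduct

section SlimTriangles

variable {S : Type*} [MetricSpace S] {δ : ℝ} {Γ Γ₁ Γ₂ Γ₃ : Set S} {e u v x y z p : S}

namespace IsGeodesicSegment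

theorem symm (h : IsGeodesicSegment Γ u v) : IsGeodesicSegment Γ v u := by
  obtain ⟨γ, h0, h1, hd, rfl⟩ := h
  refine ⟨fun t => γ (dist u v - t), by simpa using h1, by simpa [dist_comm v u] using h0, ?_, ?_⟩
  · intro s hs t ht
    rw [dist_comm v u] at hs ht
    rw [hd _ (Set.sub_mem_Icc_zero_iff_right.2 hs) _ (Set.sub_mem_Icc_zero_iff_right.2 ht),
      sub_sub_sub_cancel_left, abs_sub_comm]
  · rw [dist_comm v u, ← Function.comp_def γ, Set.image_comp, Set.image_const_sub_Icc,
      sub_self, sub_zero]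

theorem left_mem (h : IsGeodesicSegment Γ u v) : u ∈ Γ := by
  obtain ⟨γ, h0, -, -, rfl⟩ := h
  exact ⟨0, Set.left_mem_Icc.2 dist_nonneg, h0⟩

theorem dist_add_dist (h : IsGeodesicSegment Γ u v) (hp : p ∈ Γ) :
    dist u p + dist p v = dist u v := by
  obtain ⟨γ, h0, h1, hd, rfl⟩ := h
  obtain ⟨t, ht, rfl⟩ := hp
  have hut : dist u (γ t) = t := by
    simpa [h0, abs_of_nonneg ht.1] using hd 0 (Set.left_mem_Icc.2 dist_nonneg) t ht
  have htv : dist (γ t) v = dist u v - t := by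
    simpa [h1, abs_of_nonpos (sub_nonpos.2 ht.2)] using
      hd t ht (dist u v) (Set.right_mem_Icc.2 dist_nonneg)
  rw [hut, htv, add_sub_cancel]

theorem exists_continuousOn (h : IsGeodesicSegment Γ u v) :
    ∃ γ : ℝ → S, ContinuousOn γ (Set.Icc 0 (dist u v)) ∧ Γ = γ '' Set.Icc 0 (dist u v) := by
  obtain ⟨γ, -, -, hd, hΓ⟩ := h
  have hLip : LipschitzOnWith 1 γ (Set.Icc 0 (dist u v)) :=
    LipschitzOnWith.of_dist_le_mul fun s hs t ht => by
      rw [hd s hs t ht, NNReal.coe_one, one_mul, Real.dist_eq]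
  exact ⟨γ, hLip.continuousOn, hΓ⟩

theorem isCompact (h : IsGeodesicSegment Γ u v) : IsCompact Γ := by
  obtain ⟨γ, hγ, rfl⟩ := h.exists_continuousOn
  exact isCompact_Icc.image_of_continuousOn hγ

theorem isPreconnected (h : IsGeodesicSegment Γ u v) : IsPreconnected Γ := by
  obtain ⟨γ, hγ, rfl⟩ := h.exists_continuousOn
  exact isPreconnected_Icc.image γ hγ

theorem gprod_le_dist (h : IsGeodesicSegment Γ u v) (hp : p ∈ Γ) (e : S) :
    gprod e u v ≤ dist e p := by
  have hu : dist u e ≤ dist u p + dist e p := dist_triangle_right u e p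
  have hv : dist v e ≤ dist p v + dist e p := dist_comm v p ▸ dist_triangle_right v e p
  rw [gprod, ← h.dist_add_dist hp]
  linarith

end IsGeodesicSegment

theorem DeltaHyperbolic.exists_mem_union_dist_le (hhyp : DeltaHyperbolic S δ)
    (h₁ : IsGeodesicSegment Γ₁ x y) (h₂ : IsGeodesicSegment Γ₂ y z)
    (h₃ : IsGeodesicSegment Γ₃ z x) (hp : p ∈ Γ₁) : ∃ w ∈ Γ₂ ∪ Γ₃, dist p w ≤ δ := by
  obtain ⟨w, hw, hpw⟩ :=
    (h₂.isCompact.union h₃.isCompact).exists_infDist_eq_dist ⟨y, .inl h₂.left_mem⟩ p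
  exact ⟨w, hw, hpw ▸ hhyp x y z Γ₁ Γ₂ Γ₃ h₁ h₂ h₃ p hp⟩

-- One side is connected and covered by the closed `δ`-neighbourhoods of the two others, each of
-- which it meets, so these neighbourhoods have a common point on it.
theorem DeltaHyperbolic.exists_dist_le_and_dist_le (hδ : 0 ≤ δ) (hhyp : DeltaHyperbolic S δ)
    (h₁ : IsGeodesicSegment Γ₁ x y) (h₂ : IsGeodesicSegment Γ₂ y z)
    (h₃ : IsGeodesicSegment Γ₃ z x) :
    ∃ p ∈ Γ₁, (∃ q ∈ Γ₂, dist p q ≤ δ) ∧ ∃ r ∈ Γ₃, dist p r ≤ δ := by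
  have isClosed_nhd (T : Set S) : IsClosed {p | Metric.infDist p T ≤ δ} :=
    isClosed_le (Metric.continuous_infDist_pt T) continuous_const
  have mem_nhd {T : Set S} {p : S} (hp : p ∈ T) : p ∈ {p | Metric.infDist p T ≤ δ} :=
    (Metric.infDist_zero_of_mem hp).trans_le hδ
  have cover : Γ₁ ⊆ {p | Metric.infDist p Γ₂ ≤ δ} ∪ {p | Metric.infDist p Γ₃ ≤ δ} := by
    intro p hp
    obtain ⟨w, hw | hw, hpw⟩ := hhyp.exists_mem_union_dist_le h₁ h₂ h₃ hp
    · exact .inl ((Metric.infDist_le_dist_of_mem hw).trans hpw)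
    · exact .inr ((Metric.infDist_le_dist_of_mem hw).trans hpw)
  obtain ⟨p, hp, hp₂, hp₃⟩ := isPreconnected_closed_iff.1 h₁.isPreconnected _ _
    (isClosed_nhd Γ₂) (isClosed_nhd Γ₃) cover
    ⟨y, h₁.symm.left_mem, mem_nhd h₂.left_mem⟩ ⟨x, h₁.left_mem, mem_nhd h₃.symm.left_mem⟩
  obtain ⟨q, hq, hpq⟩ := h₂.isCompact.exists_infDist_eq_dist ⟨y, h₂.left_mem⟩ p
  obtain ⟨r, hr, hpr⟩ := h₃.isCompact.exists_infDist_eq_dist ⟨z, h₃.left_mem⟩ p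
  exact ⟨p, hp, ⟨q, hq, hpq ▸ hp₂⟩, r, hr, hpr ▸ hp₃⟩

theorem IsGeodesicSegment.dist_le_dist_sub_dist_add (h : IsGeodesicSegment Γ e x) {q : S}
    (hq : q ∈ Γ) (hpq : dist p q ≤ δ) : dist e p ≤ dist e x - dist p x + 2 * δ := by
  have hep : dist e p ≤ dist e q + dist p q := dist_triangle_right e p q
  have hpx : dist p x ≤ dist p q + dist q x := dist_triangle p q x
  linarith [h.dist_add_dist hq]

theorem DeltaHyperbolic.exists_dist_le_gprod_add (hδ : 0 ≤ δ) (hgeo : GeodesicSpace S)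
    (hhyp : DeltaHyperbolic S δ) (h : IsGeodesicSegment Γ x y) (e : S) :
    ∃ p ∈ Γ, dist e p ≤ gprod e x y + 2 * δ := by
  obtain ⟨Γ₂, h₂⟩ := hgeo y e
  obtain ⟨Γ₃, h₃⟩ := hgeo e x
  obtain ⟨p, hp, ⟨q, hq, hpq⟩, r, hr, hpr⟩ := hhyp.exists_dist_le_and_dist_le hδ h h₂ h₃
  refine ⟨p, hp, ?_⟩
  have hy : dist e p ≤ dist y e - dist p y + 2 * δ :=
    dist_comm e y ▸ h₂.symm.dist_le_dist_sub_dist_add hq hpq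
  have hx : dist e p ≤ dist x e - dist x p + 2 * δ :=
    dist_comm e x ▸ dist_comm p x ▸ h₃.dist_le_dist_sub_dist_add hr hpr
  rw [gprod, ← h.dist_add_dist hp]
  linarith

theorem DeltaHyperbolic.fourPointHyperbolic (hδ : 0 ≤ δ) (hgeo : GeodesicSpace S)
    (hhyp : DeltaHyperbolic S δ) (e : S) : FourPointHyperbolic e (3 * δ) := by
  intro x y z
  obtain ⟨Γ₁, h₁⟩ := hgeo x z
  obtain ⟨Γ₂, h₂⟩ := hgeo z y
  obtain ⟨Γ₃, h₃⟩ := hgeo y x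
  obtain ⟨p, hp, hep⟩ := hhyp.exists_dist_le_gprod_add hδ hgeo h₁ e
  obtain ⟨w, hw, hpw⟩ := hhyp.exists_mem_union_dist_le h₁ h₂ h₃ hp
  have hew : dist e w ≤ gprod e x z + 3 * δ := by linarith [dist_triangle e p w]
  rcases hw with hw | hw
  · exact min_le_of_right_le ((h₂.symm.gprod_le_dist hw e).trans hew)
  · exact min_le_of_left_le ((h₃.symm.gprod_le_dist hw e).trans hew)

end SlimTriangles

section Boundary

variable {S : Type*} [MetricSpace S] {e : S} {δ : ℝ} {x y : GBoundary S e} {s t : ℕ → S}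

theorem exists_tendstoBd (x : GBoundary S e) : ∃ s : ℕ → S, TendstoBd e s x := by
  obtain ⟨s, rfl⟩ := Quot.exists_rep x
  exact ⟨s.1, s.2, rfl⟩

theorem TendstoBd.bdMap (hs : TendstoBd e s x) {f : S → S} (hf : Isometry f) :
    TendstoBd e (fun n => f (s n)) (bdMap e f hf x) := by
  obtain ⟨h, rfl⟩ := hs
  exact ⟨h.comp hf, rfl⟩

theorem FourPointHyperbolic.bequiv_equivalence (h : FourPointHyperbolic e δ) :
    Equivalence (bequiv (S := S) e) where
  refl s := Tendsto.comp (show Tendsto _ _ _ from s.2) tendsto_atTop_diagonal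
  symm {s t} hst := hst.congr fun n => gprod_comm e (s.1 n) (t.1 n)
  trans hst htu := h.tendsto_gprod_trans hst htu

theorem FourPointHyperbolic.tendsto_gprod (h : FourPointHyperbolic e δ)
    (hs : TendstoBd e s x) (ht : TendstoBd e t x) :
    Tendsto (fun p : ℕ × ℕ => gprod e (s p.1) (t p.2)) (atTop ×ˢ atTop) atTop := by
  obtain ⟨hs', rfl⟩ := hs
  obtain ⟨ht', hts⟩ := ht
  have hst : bequiv e ⟨s, hs'⟩ ⟨t, ht'⟩ :=
    h.bequiv_equivalence.eqvGen_iff.1 (Quot.eqvGen_exact hts.symm)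
  rw [ConvToInfty, ← prod_atTop_atTop_eq] at ht'
  exact h.tendsto_gprod_trans (Tendsto.comp hst tendsto_fst) ht'

theorem eventually_lt_gprod_of_lt_gprodBB {M : ℝ} (hM : (M : EReal) < gprodBB e x y)
    (hs : TendstoBd e s x) (ht : TendstoBd e t y) :
    ∀ᶠ p : ℕ × ℕ in atTop, M < gprod e (s p.1) (t p.2) :=
  (eventually_lt_of_lt_liminf (hM.trans_le (sInf_le ⟨s, t, hs, ht, rfl⟩))).mono
    fun _ => EReal.coe_lt_coe_iff.1

-- The infimum yields representatives `s', t'` with small products; compare along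
-- `s' i, s n, t m, t' j`, with one four-point inequality for each of `s` and `t`.
theorem FourPointHyperbolic.eventually_gprod_lt_of_gprodBB_lt (h : FourPointHyperbolic e δ)
    {C : ℝ} (hC : gprodBB e x y < C) (hs : TendstoBd e s x) (ht : TendstoBd e t y) :
    ∀ᶠ p : ℕ × ℕ in atTop, gprod e (s p.1) (t p.2) < C + 2 * δ := by
  obtain ⟨-, ⟨s', t', hs', ht', rfl⟩, hlt⟩ := sInf_lt_iff.1 hC
  have small : ∃ᶠ p : ℕ × ℕ in atTop ×ˢ atTop, gprod e (s' p.1) (t' p.2) < C := by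
    rw [prod_atTop_atTop_eq]
    exact (frequently_lt_of_liminf_lt (by isBoundedDefault) hlt).mono
      fun _ => EReal.coe_lt_coe_iff.1
  have near_s : ∀ᶠ i in atTop, ∀ᶠ n in atTop, C + δ ≤ gprod e (s' i) (s n) :=
    ((h.tendsto_gprod hs' hs).eventually_ge_atTop _).curry
  have near_t : ∀ᶠ j in atTop, ∀ᶠ m in atTop, C + δ + δ ≤ gprod e (t' j) (t m) :=
    ((h.tendsto_gprod ht' ht).eventually_ge_atTop _).curry
  obtain ⟨⟨i, j⟩, hij, hi, hj⟩ := (small.and_eventually (near_s.prod_mk near_t)).exists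
  rw [← prod_atTop_atTop_eq]
  filter_upwards [hi.prod_mk hj] with p ⟨hp, hp'⟩
  contrapose! hij
  rw [gprod_comm] at hp'
  exact h.le_gprod hp (h.le_gprod (by linarith) hp')

theorem FourPointHyperbolic.add_lt_of_gprodBB_lt (h : FourPointHyperbolic e δ) {f : S → S}
    (hf : Isometry f) {a a' b b' : GBoundary S e} {M C D : ℝ}
    (haa' : M < gprodBB e a a') (hbb' : M < gprodBB e b b')
    (hab : gprodBB e a b < C) (hab' : gprodBB e a' b' < C)
    (hfa : gprodBB e (bdMap e f hf a) (bdMap e f hf a') < D)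
    (hfb : gprodBB e (bdMap e f hf b) (bdMap e f hf b') < D) : M < C + D + 4 * δ := by
  obtain ⟨s, hs⟩ := exists_tendstoBd a
  obtain ⟨s', hs'⟩ := exists_tendstoBd a'
  obtain ⟨t, ht⟩ := exists_tendstoBd b
  obtain ⟨t', ht'⟩ := exists_tendstoBd b'
  obtain ⟨n, hss', htt', hst, hst', hfs, hft⟩ := (tendsto_atTop_diagonal.eventually <|
    (eventually_lt_gprod_of_lt_gprodBB haa' hs hs').and <|
    (eventually_lt_gprod_of_lt_gprodBB hbb' ht ht').and <|
    (h.eventually_gprod_lt_of_gprodBB_lt hab hs ht).and <|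
    (h.eventually_gprod_lt_of_gprodBB_lt hab' hs' ht').and <|
    (h.eventually_gprod_lt_of_gprodBB_lt hfa (hs.bdMap hf) (hs'.bdMap hf)).and <|
    h.eventually_gprod_lt_of_gprodBB_lt hfb (ht.bdMap hf) (ht'.bdMap hf)).exists
  linarith [gprod_add_gprod_sub_sub_map hf e (s n) (s' n) (t n) (t' n),
    gprod_nonneg e (f (s n)) (f (t n)), gprod_nonneg e (f (s' n)) (f (t' n))]

end Boundary

section VisualMetric

variable {S : Type*} [MetricSpace S] {e : S} {ζ : ℝ} {x y : GBoundary S e}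

theorem gprodBB_nonneg (x y : GBoundary S e) : 0 ≤ gprodBB e x y := by
  refine le_sInf ?_
  rintro - ⟨s, t, -, -, rfl⟩
  exact le_liminf_of_le (by isBoundedDefault)
    (.of_forall fun p => EReal.coe_nonneg.2 (gprod_nonneg e _ _))

theorem gprodBB_ne_bot (x y : GBoundary S e) : gprodBB e x y ≠ ⊥ :=
  (EReal.bot_lt_zero.trans_le (gprodBB_nonneg x y)).ne'

theorem dExp_lt_exp_iff (hζ : 0 < ζ) {M : ℝ} :
    dExp e ζ x y < Real.exp (-ζ * M) ↔ M < gprodBB e x y := by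
  by_cases htop : gprodBB e x y = ⊤
  · simp only [dExp, htop, if_true, Real.exp_pos, EReal.coe_lt_top]
  · rw [dExp, if_neg htop, Real.exp_lt_exp, mul_lt_mul_left_of_neg (neg_neg_of_pos hζ),
      ← EReal.coe_lt_coe_iff, EReal.coe_toReal htop (gprodBB_ne_bot x y)]

theorem exp_lt_dExp_iff (hζ : 0 < ζ) {C : ℝ} :
    Real.exp (-ζ * C) < dExp e ζ x y ↔ gprodBB e x y < C := by
  by_cases htop : gprodBB e x y = ⊤
  · simp only [dExp, htop, if_true, (Real.exp_pos _).not_gt, not_top_lt]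
  · rw [dExp, if_neg htop, Real.exp_lt_exp, mul_lt_mul_left_of_neg (neg_neg_of_pos hζ),
      ← EReal.coe_lt_coe_iff, EReal.coe_toReal htop (gprodBB_ne_bot x y)]

namespace VisualParam

theorem exists_isOpen_rhoChain_lt (hζ : VisualParam e ζ) (x : GBoundary S e) {r : ℝ}
    (hr : 0 < r) : ∃ U : Set (GBoundary S e), IsOpen[bdTopology S e ζ] U ∧ x ∈ U ∧
      ∀ u ∈ U, rhoChain e ζ x u < r :=
  ⟨{u | rhoChain e ζ x u < r}, TopologicalSpace.isOpen_generateFrom_of_mem ⟨x, r, hr, rfl⟩,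
    ((hζ.2.1.2.1 x x).2 rfl).trans_lt hr, fun _ hu => hu⟩

theorem exists_isOpen_lt_gprodBB (hζ : VisualParam e ζ) (x : GBoundary S e) (M : ℝ) :
    ∃ U : Set (GBoundary S e), IsOpen[bdTopology S e ζ] U ∧ x ∈ U ∧
      ∀ u ∈ U, ∀ v ∈ U, M < gprodBB e u v := by
  have ⟨hpos, ⟨_, _, hsymm, htri⟩, hcomp⟩ := hζ
  obtain ⟨U, hU, hxU, hUr⟩ := hζ.exists_isOpen_rhoChain_lt x
    (show 0 < Real.exp (-ζ * M) / 4 by positivity)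
  refine ⟨U, hU, hxU, fun u hu v hv => (dExp_lt_exp_iff hpos).1 ?_⟩
  calc dExp e ζ u v ≤ 2 * rhoChain e ζ u v := by linarith [(hcomp u v).1]
    _ ≤ 2 * (rhoChain e ζ x u + rhoChain e ζ x v) := by linarith [htri u x v, hsymm u x]
    _ < Real.exp (-ζ * M) := by linarith [hUr u hu, hUr v hv]

theorem exists_isOpen_gprodBB_lt (hζ : VisualParam e ζ) (hxy : x ≠ y) :
    ∃ U V : Set (GBoundary S e), IsOpen[bdTopology S e ζ] U ∧ IsOpen[bdTopology S e ζ] V ∧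
      x ∈ U ∧ y ∈ V ∧ ∃ C : ℝ, ∀ u ∈ U, ∀ v ∈ V, gprodBB e u v < C := by
  have ⟨hpos, ⟨hnonneg, heq, hsymm, htri⟩, hcomp⟩ := hζ
  have hρ : 0 < rhoChain e ζ x y := (hnonneg x y).lt_of_ne' (mt (heq x y).1 hxy)
  obtain ⟨U, hU, hxU, hUr⟩ := hζ.exists_isOpen_rhoChain_lt x (div_pos hρ three_pos)
  obtain ⟨V, hV, hyV, hVr⟩ := hζ.exists_isOpen_rhoChain_lt y (div_pos hρ three_pos)
  obtain ⟨C, hC⟩ : ∃ C, Real.exp (-ζ * C) < rhoChain e ζ x y / 3 :=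
    ((Real.tendsto_exp_atBot.comp
      (tendsto_id.const_mul_atTop_of_neg (neg_neg_of_pos hpos))).eventually_lt_const
        (div_pos hρ three_pos)).exists
  refine ⟨U, V, hU, hV, hxU, hyV, C, fun u hu v hv => (exp_lt_dExp_iff hpos).1 ?_⟩
  calc Real.exp (-ζ * C) < rhoChain e ζ x y / 3 := hC
    _ ≤ rhoChain e ζ u v := by
      linarith [htri x u y, htri u v y, hsymm v y, hUr u hu, hVr v hv]
    _ ≤ dExp e ζ u v := (hcomp u v).2

end VisualParam

end VisualMetric

theorem FourPointHyperbolic.exists_isOpen_forall_isometry_not_nonempty {S : Type*} [MetricSpace S]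
    {e : S} {δ ζ : ℝ} (h : FourPointHyperbolic e δ) (hζ : VisualParam e ζ)
    {U V : Set (GBoundary S e)} {D : ℝ} (hD : ∀ u ∈ U, ∀ v ∈ V, gprodBB e u v < D)
    {p q : GBoundary S e} (hpq : p ≠ q) :
    ∃ A B : Set (GBoundary S e), IsOpen[bdTopology S e ζ] A ∧ IsOpen[bdTopology S e ζ] B ∧
      p ∈ A ∧ q ∈ B ∧ ∀ (f : S → S) (hf : Isometry f),
        ¬((bdMap e f hf '' A ∩ U).Nonempty ∧ (bdMap e f hf '' A ∩ V).Nonempty ∧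
          (bdMap e f hf '' B ∩ U).Nonempty ∧ (bdMap e f hf '' B ∩ V).Nonempty) := by
  let := bdTopology S e ζ
  obtain ⟨A₁, B₁, hA₁, hB₁, hpA₁, hqB₁, C, hC⟩ := hζ.exists_isOpen_gprodBB_lt hpq
  obtain ⟨A₂, hA₂, hpA₂, hA⟩ := hζ.exists_isOpen_lt_gprodBB p (C + D + 4 * δ)
  obtain ⟨B₂, hB₂, hqB₂, hB⟩ := hζ.exists_isOpen_lt_gprodBB q (C + D + 4 * δ)
  refine ⟨A₁ ∩ A₂, B₁ ∩ B₂, hA₁.inter hA₂, hB₁.inter hB₂, ⟨hpA₁, hpA₂⟩, ⟨hqB₁, hqB₂⟩,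
    fun f hf => ?_⟩
  rintro ⟨⟨_, ⟨a, ⟨ha₁, ha₂⟩, rfl⟩, haU⟩, ⟨_, ⟨a', ⟨ha₁', ha₂'⟩, rfl⟩, haV'⟩,
    ⟨_, ⟨b, ⟨hb₁, hb₂⟩, rfl⟩, hbU⟩, ⟨_, ⟨b', ⟨hb₁', hb₂'⟩, rfl⟩, hbV'⟩⟩
  exact lt_irrefl (C + D + 4 * δ) <| h.add_lt_of_gprodBB_lt hf (hA a ha₂ a' ha₂')
    (hB b hb₂ b' hb₂') (hC a ha₁ b hb₁) (hC a' ha₁' b' hb₁') (hD _ haU _ haV') (hD _ hbU _ hbV')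

theorem statement11_general {ι S : Type*} [MetricSpace S] {e : S} {δ ζ : ℝ}
    (h : FourPointHyperbolic e δ) {f : ι → S → S} (hf : ∀ i, Isometry (f i))
    (hζ : VisualParam e ζ) {x y : GBoundary S e} (hxy : x ≠ y) :
    @PairC1 ι (GBoundary S e) (bdTopology S e ζ) (fun i => bdMap e (f i) (hf i)) x y := by
  obtain ⟨U, V, hU, hV, hxU, hyV, D, hD⟩ := hζ.exists_isOpen_gprodBB_lt hxy
  refine ⟨U, V, hU, hV, hxU, hyV, fun p q hpq => ?_⟩
  obtain ⟨A, B, hA, hB, hpA, hqB, hAB⟩ :=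
    h.exists_isOpen_forall_isometry_not_nonempty hζ hD hpq
  exact ⟨A, B, hA, hB, hpA, hqB, Set.finite_empty.subset fun i => hAB (f i) (hf i)⟩

/-- For an isometric action of `G` on a geodesic `δ`-hyperbolic space,
every pair of distinct boundary points satisfies condition (C₁) for the induced action
on the Gromov boundary. -/
theorem statement11 {G S : Type*} [Group G] [MetricSpace S] (δ : ℝ) (hδ : 0 ≤ δ)
    (hgeo : GeodesicSpace S) (hhyp : DeltaHyperbolic S δ)
    {act : G → S → S} (hact : IsIsometricAction act)
    (e : S) (ζ : ℝ) (hζ : VisualParam e ζ)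
    (x y : GBoundary S e) (hxy : x ≠ y) :
    @PairC1 G (GBoundary S e) (bdTopology S e ζ)
      (fun g => bdMap e (act g) (hact.2 g)) x y :=
  statement11_general (hhyp.fourPointHyperbolic hδ hgeo e) hact.2 hζ hxy
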